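/- Let (y_i) satisfy |y_i| ≤ M i!/R^i, let 0 < R' < R, s > 1, and define y(t) = φ_s((t-t₁)/R') · ∑_{i≥0} y_i (t-t₁)^i/i! on [t₁, t₁+R']. Then y is C^∞ with y^(i)(t₁) = y_i and y^(i)(t₁+R') = 0 for all i ≥ 0. -/

import Mathlib

open Filter Topology in
theorem fo_tendsto (k : ℝ) (hk : 0 < k) (a : ℝ) :
    Tendsto (fun x : ℝ => x ^ a * Real.exp (-x ^ (-k))) (𝓝[>] 0) (𝓝 0) := by
  have h1 : Tendsto (fun x : ℝ => x ^ (-k)) (𝓝[>] 0) atTop :=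
    tendsto_rpow_neg_nhdsGT_zero (by linarith)
  have h2 := (tendsto_rpow_mul_exp_neg_mul_atTop_nhds_zero (-a / k) 1 one_pos).comp h1
  refine h2.congr' ?_
  filter_upwards [self_mem_nhdsWithin] with x hx
  have hx : 0 < x := hx
  simp only [Function.comp]
  rw [← Real.rpow_mul hx.le]
  congr 2
  · field_simp
  · ring

/-- the flat functions `x ^ a * exp (-x ^ (-k))` extended by zero -/
noncomputable def foFlat (k a x : ℝ) : ℝ := if 0 < x then x ^ a * Real.exp (-x ^ (-k)) else 0

open Filter Topology in
theorem foFlat_hasDerivAt (k : ℝ) (hk : 0 < k) (a x : ℝ) :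
    HasDerivAt (foFlat k a) (a * foFlat k (a - 1) x + k * foFlat k (a - k - 1) x) x := by
  rcases lt_trichotomy x 0 with hx | hx | hx
  · have : foFlat k a =ᶠ[𝓝 x] fun _ => 0 := by
      filter_upwards [Iio_mem_nhds hx] with z hz
      have hz : z < 0 := hz
      simp [foFlat, hz.le]
    have h := (hasDerivAt_const x (0 : ℝ)).congr_of_eventuallyEq this
    refine h.congr_deriv ?_
    simp [foFlat, not_lt.2 hx.le]
  · subst hx
    have e : a * foFlat k (a - 1) 0 + k * foFlat k (a - k - 1) 0 = 0 := by simp [foFlat]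
    rw [e, hasDerivAt_iff_tendsto_slope, ← Set.Iio_union_Ioi, nhdsWithin_union, tendsto_sup]
    constructor
    · refine tendsto_const_nhds.congr' ?_
      filter_upwards [self_mem_nhdsWithin] with z hz
      have hz : z < 0 := hz
      simp [slope, foFlat, hz.le]
    · refine (fo_tendsto k hk (a - 1)).congr' ?_
      filter_upwards [self_mem_nhdsWithin] with z hz
      have hz : 0 < z := hz
      simp [slope, foFlat, hz]
      rw [Real.rpow_sub_one hz.ne']
      ring
  · have : foFlat k a =ᶠ[𝓝 x] fun x => x ^ a * Real.exp (-x ^ (-k)) := by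
      filter_upwards [Ioi_mem_nhds hx] with z hz
      have hz : 0 < z := hz
      simp [foFlat, hz]
    have h1 := Real.hasDerivAt_rpow_const (x := x) (p := a) (Or.inl hx.ne')
    have h2 := (Real.hasDerivAt_rpow_const (x := x) (p := -k) (Or.inl hx.ne')).fun_neg.exp
    have h := (h1.mul h2).congr_of_eventuallyEq this
    refine h.congr_deriv ?_
    simp only [foFlat, hx, if_true]
    have : x ^ (a - k - 1) = x ^ a * x ^ (-k - 1) := by
      rw [← Real.rpow_add hx]; ring_nf
    rw [this]
    ring

theorem foFlat_contDiff (k : ℝ) (hk : 0 < k) (n : ℕ) : ∀ a : ℝ, ContDiff ℝ n (foFlat k a) := by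
  induction n with
  | zero =>
    intro a
    have : Differentiable ℝ (foFlat k a) :=
      fun x => (foFlat_hasDerivAt k hk a x).differentiableAt
    simpa using this.continuous
  | succ n ih =>
    intro a
    push_cast
    refine contDiff_succ_iff_deriv.2
      ⟨fun x => (foFlat_hasDerivAt k hk a x).differentiableAt, by simp, ?_⟩
    have : deriv (foFlat k a) = fun x => a * foFlat k (a - 1) x + k * foFlat k (a - k - 1) x :=
      funext fun x => (foFlat_hasDerivAt k hk a x).deriv
    rw [this]
    exact (contDiff_const.mul (ih _)).add (contDiff_const.mul (ih _))

theorem foFlat_contDiff_top (k : ℝ) (hk : 0 < k) (a : ℝ) :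
    ContDiff ℝ (⊤ : ℕ∞) (foFlat k a) :=
  contDiff_infty.2 fun n => foFlat_contDiff k hk n a

theorem fo_series (M R t₁ : ℝ) (hM : 0 < M) (hR : 0 < R)
    (ys : ℕ → ℝ) (hys : ∀ i : ℕ, |ys i| ≤ M * (i.factorial : ℝ) / R ^ i) :
    HasFPowerSeriesOnBall (fun t => ∑' i : ℕ, ys i * (t - t₁) ^ i / (i.factorial : ℝ))
      (FormalMultilinearSeries.ofScalars ℝ (fun i => ys i / (i.factorial : ℝ))) t₁
      (ENNReal.ofReal R) := by
  set p := FormalMultilinearSeries.ofScalars ℝ (fun i => ys i / (i.factorial : ℝ)) with hp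
  have hr : ENNReal.ofReal R ≤ p.radius := by
    refine p.le_radius_of_bound M (r := R.toNNReal) fun n => ?_
    rw [hp, FormalMultilinearSeries.ofScalars_norm, Real.coe_toNNReal _ hR.le, Real.norm_eq_abs,
      abs_div, Nat.abs_cast, div_mul_eq_mul_div, div_le_iff₀ (by positivity)]
    have := hys n
    rwa [le_div_iff₀ (by positivity)] at this
  have h0 : 0 < ENNReal.ofReal R := by simpa using hR
  have h := ((p.hasFPowerSeriesOnBall (h0.trans_le hr)).mono h0 hr).comp_sub t₁
  rw [zero_add] at h
  refine h.congr ?_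
  intro t _
  have := FormalMultilinearSeries.ofScalars_sum_eq (E := ℝ)
    (fun i => ys i / (i.factorial : ℝ)) (t - t₁)
  refine this.trans ?_
  refine tsum_congr fun i => ?_
  simp only [smul_eq_mul]
  ring

theorem fo_iter_eq (f g : ℝ → ℝ) (S : Set ℝ) (hS : UniqueDiffOn ℝ S) (a : ℝ) (ha : a ∈ S)
    (hf : ContDiffAt ℝ (⊤ : ℕ∞) f a) (hg : ContDiffAt ℝ (⊤ : ℕ∞) g a) (h : Set.EqOn f g S)
    (i : ℕ) : iteratedDeriv i f a = iteratedDeriv i g a := by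
  have hi : ((i : ℕ) : WithTop ℕ∞) ≤ ((⊤ : ℕ∞) : WithTop ℕ∞) := by exact_mod_cast le_top
  rw [← iteratedDerivWithin_eq_iteratedDeriv hS (hf.of_le hi) ha,
    ← iteratedDerivWithin_eq_iteratedDeriv hS (hg.of_le hi) ha]
  exact iteratedDerivWithin_congr h ha

theorem flat_output_boundary_values (s k M R R' t₁ : ℝ) (hs : 1 < s) (hk : k = 1 / (s - 1))
    (hM : 0 < M) (hR' : 0 < R') (hRR : R' < R)
    (φ : ℝ → ℝ)
    (hφ : ∀ t : ℝ, φ t = if t ≤ 0 then 1 else if 1 ≤ t then 0 else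
      Real.exp (-(1 - t) ^ (-k)) /
        (Real.exp (-(1 - t) ^ (-k)) + Real.exp (-t ^ (-k))))
    (ys : ℕ → ℝ) (hys : ∀ i : ℕ, |ys i| ≤ M * (i.factorial : ℝ) / R ^ i)
    (y : ℝ → ℝ)
    (hy : ∀ t : ℝ, y t = φ ((t - t₁) / R') *
      ∑' i : ℕ, ys i * (t - t₁) ^ i / (i.factorial : ℝ)) :
    ContDiffOn ℝ (⊤ : ℕ∞) y (Set.Icc t₁ (t₁ + R')) ∧
    (∀ i : ℕ, iteratedDeriv i y t₁ = ys i) ∧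
    (∀ i : ℕ, iteratedDeriv i y (t₁ + R') = 0) := by
  have hk0 : 0 < k := by rw [hk]; exact one_div_pos.2 (by linarith)
  have hR : 0 < R := hR'.trans hRR
  have hφ' : φ = fun t => foFlat k 0 (1 - t) / (foFlat k 0 (1 - t) + foFlat k 0 t) := by
    funext t
    rw [hφ]
    by_cases h1 : t ≤ 0
    · have h3 : t < 1 := by linarith
      simp [foFlat, h1, h3, not_lt.2 h1]
    · by_cases h2 : 1 ≤ t
      · simp [foFlat, h1, h2, not_lt.2 h2]
      · simp [foFlat, h1, h2, not_le.1 h1, not_le.1 h2]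
  have hnn : ∀ x, 0 ≤ foFlat k 0 x := by
    intro x
    unfold foFlat
    split_ifs
    · positivity
    · exact le_rfl
  have hpos : ∀ x, 0 < x → 0 < foFlat k 0 x := by
    intro x hx
    simp [foFlat, hx, Real.exp_pos]
  have hφs : ContDiff ℝ (⊤ : ℕ∞) φ := by
    rw [hφ']
    have hc := foFlat_contDiff_top k hk0 0
    have hc1 : ContDiff ℝ (⊤ : ℕ∞) (fun t => foFlat k 0 (1 - t)) :=
      hc.comp (contDiff_const.sub contDiff_id)
    refine hc1.div (hc1.add hc) fun t => ?_
    rcases lt_or_ge 0 t with h | h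
    · exact (add_pos_of_nonneg_of_pos (hnn _) (hpos _ h)).ne'
    · exact (add_pos_of_pos_of_nonneg (hpos _ (by linarith)) (hnn _)).ne'
  have hS := fo_series M R t₁ hM hR ys hys
  set S : ℝ → ℝ := fun t => ∑' i : ℕ, ys i * (t - t₁) ^ i / (i.factorial : ℝ) with hSdef
  have hSc : ∀ t ∈ Set.Icc t₁ (t₁ + R'), ContDiffAt ℝ (⊤ : ℕ∞) S t := by
    intro t ht
    refine (hS.analyticAt_of_mem ?_).contDiffAt
    rw [Metric.mem_eball, edist_dist]
    refine (ENNReal.ofReal_lt_ofReal_iff hR).2 ?_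
    rw [Real.dist_eq, abs_of_nonneg (by linarith [ht.1])]
    linarith [ht.2]
  have hyc : ∀ t ∈ Set.Icc t₁ (t₁ + R'), ContDiffAt ℝ (⊤ : ℕ∞) y t := by
    intro t ht
    have : y = fun t => φ ((t - t₁) / R') * S t := funext hy
    rw [this]
    refine ContDiffAt.mul ?_ (hSc t ht)
    exact (hφs.comp ((contDiff_id.sub contDiff_const).div_const R')).contDiffAt
  have m1 : t₁ ∈ Set.Icc t₁ (t₁ + R') := ⟨le_rfl, by linarith⟩
  have m2 : t₁ + R' ∈ Set.Icc t₁ (t₁ + R') := ⟨by linarith, le_rfl⟩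
  refine ⟨fun t ht => (hyc t ht).contDiffWithinAt, fun i => ?_, fun i => ?_⟩
  · rw [fo_iter_eq y S (Set.Iic t₁) (uniqueDiffOn_Iic t₁) t₁ Set.self_mem_Iic (hyc _ m1)
      (hSc _ m1) ?_ i]
    · have h := hS.factorial_smul 1 i
      rw [iteratedDeriv_eq_iteratedFDeriv, ← h,
        FormalMultilinearSeries.ofScalars_apply_eq]
      have : (i.factorial : ℝ) ≠ 0 := by positivity
      simp
      field_simp
    · intro t ht
      have ht : t ≤ t₁ := ht
      have h0 : (t - t₁) / R' ≤ 0 := div_nonpos_of_nonpos_of_nonneg (by linarith) hR'.le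
      rw [hy, hφ, if_pos h0, one_mul]
  · rw [fo_iter_eq y (fun _ => 0) (Set.Ici (t₁ + R')) (uniqueDiffOn_Ici _) _ Set.self_mem_Ici
      (hyc _ m2) contDiffAt_const ?_ i]
    · simp
    · intro t ht
      have ht : t₁ + R' ≤ t := ht
      have h1 : 1 ≤ (t - t₁) / R' := by rw [le_div_iff₀ hR']; linarith
      have h0 : ¬ (t - t₁) / R' ≤ 0 := by linarith
      simp only
      rw [hy, hφ, if_neg h0, if_pos h1, zero_mul]
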